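/- Let f : S → ℂ be a non-zero solution of the integral Van Vleck equation. Then for all x ∈ S, Σ_{i∈I} Σ_{j∈I} c_i c_j f(x τ(z_i) z_j) = f(x) · Σ_{i∈I} c_i f(z_i). -/

import Mathlib

/-!
Write `φ x = ∫ f (x t) dμ(t)` and `ψ x = ∫ f (x τ(t)) dμ(t)`, so that the equation reads
`φ (x τ(y)) - φ (x y) = 2 f x f y`. It forces `f ∘ τ = -f`. Integrating it over central elements
gives `f a (φ x + ψ x) = (φ a + ψ a) f x`, and integrating this once more in `x` makes the left side
odd under `τ`, whence `(φ a + ψ a) (φ x + φ (τ x)) = 0`. If `φ` were odd under `τ`, then `f` would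
vanish; therefore `ψ = -φ`. The claim now follows from
`∫ φ (x τ(t)) dμ(t) - ∫ φ (x t) dμ(t) = 2 f x ∫ f dμ`, where the two integrals on the left are
opposite.
-/

section TranslateSum

variable {S ι κ R : Type*}

/-- The operator `h ↦ (x ↦ ∫ h (x t) dμ(t))` attached to the discrete measure
`μ = ∑ i ∈ I, c i • δ_(z i)`, as a linear map on functions `S → R`. -/
def translateSum [Mul S] [CommSemiring R] (I : Finset ι) (c : ι → R) (z : ι → S) :
    (S → R) →ₗ[R] (S → R) :=
  ∑ i ∈ I, c i • LinearMap.funLeft R R (· * z i)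

theorem translateSum_apply [Mul S] [CommSemiring R] (I : Finset ι) (c : ι → R) (z : ι → S)
    (h : S → R) (x : S) :
    translateSum I c z h x = ∑ i ∈ I, c i * h (x * z i) := by
  simp [translateSum, LinearMap.funLeft]

variable [Semigroup S]

theorem translateSum_comm [CommSemiring R] (I : Finset ι) (c : ι → R) (z : ι → S) {J : Finset κ}
    (d : κ → R) {w : κ → S} (hw : ∀ j ∈ J, w j ∈ Set.center S) (h : S → R) :
    translateSum I c z (translateSum J d w h) = translateSum J d w (translateSum I c z h) := by
  ext x
  simp only [translateSum_apply, Finset.mul_sum]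
  rw [Finset.sum_comm]
  refine Finset.sum_congr rfl fun j hj => Finset.sum_congr rfl fun i _ => ?_
  rw [mul_assoc x, mul_assoc x, (hw j hj).comm (z i)]
  ring

variable [StarMul S] {I : Finset ι} {z : ι → S}

theorem translateSum_apply_star [CommSemiring R] (c : ι → R) (hz : ∀ i ∈ I, z i ∈ Set.center S)
    (h : S → R) (x : S) :
    translateSum I c z h (star x) = translateSum I c (star z) (h ∘ star) x := by
  simp only [translateSum_apply, Function.comp_apply, Pi.star_apply, star_mul, star_star]
  exact Finset.sum_congr rfl fun i hi => by rw [(hz i hi).comm (star x)]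

variable [CommRing R] (c : ι → R)

theorem translateSum_apply_star_of_odd (hz : ∀ i ∈ I, z i ∈ Set.center S) {f : S → R}
    (hf : f ∘ star = -f) (x : S) :
    translateSum I c z f (star x) = -translateSum I c (star z) f x := by
  rw [translateSum_apply_star c hz, hf, map_neg, Pi.neg_apply]

theorem translateSum_star_translateSum_apply_star (hz : ∀ i ∈ I, z i ∈ Set.center S) {f : S → R}
    (hf : f ∘ star = -f) (x : S) :
    translateSum I c (star z) (translateSum I c z f) (star x) =
      -translateSum I c (star z) (translateSum I c z f) x := by
  have h_comp : translateSum I c z f ∘ star = -translateSum I c (star z) f :=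
    funext (translateSum_apply_star_of_odd c hz hf)
  have hz_star (i : ι) (hi : i ∈ I) : star z i ∈ Set.center S := Set.star_mem_center (hz i hi)
  rw [translateSum_apply_star c hz_star, star_star, h_comp, map_neg,
    translateSum_comm I c (star z) c hz, Pi.neg_apply]

end TranslateSum

/-- The Van Vleck equation for a pair of functions on a semigroup with involution `star`. The
integral Van Vleck equation for `f` is the case where `φ x = ∫ f (x t) dμ(t)`. -/
def IsVanVleckPair {S R : Type*} [Semigroup S] [StarMul S] [CommRing R] (φ f : S → R) : Prop :=
  ∀ x y, φ (x * star y) - φ (x * y) = 2 * f x * f y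

namespace IsVanVleckPair

variable {S ι R : Type*} [Semigroup S] [StarMul S] [CommRing R] {φ f : S → R}

section Integration

variable {I : Finset ι} (c : ι → R) {z : ι → S}

theorem translateSum_star_sub_translateSum (h : IsVanVleckPair φ f) (x : S) :
    translateSum I c (star z) φ x - translateSum I c z φ x =
      2 * f x * ∑ i ∈ I, c i * f (z i) := by
  simp only [translateSum_apply, ← Finset.sum_sub_distrib, Finset.mul_sum, Pi.star_apply]
  exact Finset.sum_congr rfl fun i _ => by linear_combination c i * h x (z i)

theorem translateSum_left (h : IsVanVleckPair φ f) (hz : ∀ i ∈ I, z i ∈ Set.center S) (x y : S) :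
    translateSum I c z φ (x * star y) - translateSum I c z φ (x * y) =
      2 * translateSum I c z f x * f y := by
  simp only [translateSum_apply, ← Finset.sum_sub_distrib, Finset.mul_sum, Finset.sum_mul]
  refine Finset.sum_congr rfl fun i hi => ?_
  have h_swap (s : S) : x * s * z i = x * z i * s := by
    rw [mul_assoc, mul_assoc, (hz i hi).comm s]
  rw [h_swap, h_swap]
  linear_combination c i * h (x * z i) y

theorem translateSum_right (h : IsVanVleckPair φ f) (hz : ∀ i ∈ I, z i ∈ Set.center S) (x y : S) :
    translateSum I c (star z) φ (x * star y) - translateSum I c z φ (x * y) =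
      2 * f x * translateSum I c z f y := by
  simp only [translateSum_apply, ← Finset.sum_sub_distrib, Finset.mul_sum, Pi.star_apply]
  refine Finset.sum_congr rfl fun i hi => ?_
  have h_star : x * star (y * z i) = x * star y * star (z i) := by
    rw [star_mul, (Set.star_mem_center (hz i hi)).comm, mul_assoc]
  have h_i := h x (y * z i)
  rw [h_star, ← mul_assoc] at h_i
  linear_combination c i * h_i

end Integration

variable [NoZeroDivisors R] [NeZero (2 : R)]

theorem comp_star_eq_neg (h : IsVanVleckPair φ f) : f ∘ star = -f := by
  by_cases hf : ∃ a, f a ≠ 0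
  · obtain ⟨a, ha⟩ := hf
    funext y
    have h_star := h a (star y)
    rw [star_star] at h_star
    have h_mul : 2 * f a * (f (star y) + f y) = 0 := by linear_combination -h a y - h_star
    exact eq_neg_of_add_eq_zero_left
      ((mul_eq_zero.mp h_mul).resolve_left (mul_ne_zero two_ne_zero ha))
  · push Not at hf
    funext y
    simp [hf]

theorem eq_zero_of_odd (h : IsVanVleckPair φ f) (hφ : φ ∘ star = -φ) : f = 0 := by
  have φ_eq_zero {s : S} (hs : IsSelfAdjoint s) : φ s = 0 := by
    have h_neg : φ (star s) = -φ s := congrFun hφ s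
    rw [hs.star_eq] at h_neg
    have h_two : 2 * φ s = 0 := by linear_combination h_neg
    exact (mul_eq_zero.mp h_two).resolve_left two_ne_zero
  funext a
  have f_star : f (star a) = -f a := congrFun h.comp_star_eq_neg a
  have φ_mul_self : φ (a * a) = -(2 * f a * f a) := by
    linear_combination φ_eq_zero (.mul_star_self a) - h a a
  have φ_star_mul_star : φ (star a * star a) = -(2 * f a * f a) := by
    have h_star := h (star a) (star a)
    rw [star_star, φ_eq_zero (.star_mul_self a), f_star] at h_star
    linear_combination -h_star
  have φ_star_mul_self : φ (star a * star a) = -φ (a * a) := by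
    rw [← star_mul]
    exact congrFun hφ (a * a)
  have h_sq : (2 * f a) * (2 * f a) = 0 := by
    linear_combination φ_star_mul_star + φ_mul_self - φ_star_mul_self
  exact (mul_eq_zero.mp (mul_self_eq_zero.mp h_sq)).resolve_left two_ne_zero

section Integration

variable {I : Finset ι} {c : ι → R} {z : ι → S}

theorem mul_translateSum_add_translateSum_star (h : IsVanVleckPair φ f)
    (hz : ∀ i ∈ I, z i ∈ Set.center S) (a x : S) :
    f a * (translateSum I c z f x + translateSum I c (star z) f x) =
      (translateSum I c z f a + translateSum I c (star z) f a) * f x := by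
  have hz_star (i : ι) (hi : i ∈ I) : star z i ∈ Set.center S := Set.star_mem_center (hz i hi)
  have right_star := h.translateSum_right c hz_star a x
  rw [star_star] at right_star
  refine mul_left_cancel₀ (two_ne_zero (α := R)) ?_
  -- Doubled, both sides are `G (a * star x) - G (a * x)` for the same function `G`, the sum of the
  -- two integrals of `φ`.
  linear_combination h.translateSum_left c hz a x + h.translateSum_left c hz_star a x -
    h.translateSum_right c hz a x - right_star

theorem translateSum_add_mul_translateSum_add (h : IsVanVleckPair (translateSum I c z f) f)
    (hz : ∀ i ∈ I, z i ∈ Set.center S) (a x : S) :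
    (translateSum I c z f a + translateSum I c (star z) f a) *
      (translateSum I c z f x + translateSum I c z f (star x)) = 0 := by
  set φ := translateSum I c z f
  set ψ := translateSum I c (star z) f
  set g := translateSum I c (star z) φ
  set F := ∑ i ∈ I, c i * f (z i)
  have f_star (s : S) : f (star s) = -f s := congrFun h.comp_star_eq_neg s
  have g_star (s : S) : g (star s) = -g s :=
    translateSum_star_translateSum_apply_star c hz h.comp_star_eq_neg s
  have translateSum_φ (s : S) : translateSum I c z φ s = g s - 2 * f s * F := by
    linear_combination -h.translateSum_star_sub_translateSum c s
  have translateSum_ψ : translateSum I c z ψ = g := (translateSum_comm I c (star z) c hz f).symm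
  have mul_add (s : S) : f a * (translateSum I c z φ s + g s) = (φ a + ψ a) * φ s := by
    have h_smul : f a • (φ + ψ) = (φ a + ψ a) • f :=
      funext (h.mul_translateSum_add_translateSum_star hz a)
    have h_int := congrFun (congrArg (translateSum I c z) h_smul) s
    simpa only [map_smul, map_add, translateSum_ψ, Pi.smul_apply, Pi.add_apply, smul_eq_mul]
      using h_int
  have odd_sum : translateSum I c z φ (star x) + g (star x) = -(translateSum I c z φ x + g x) := by
    rw [translateSum_φ, translateSum_φ, f_star, g_star]
    ring
  linear_combination -mul_add x - mul_add (star x) + f a * odd_sum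

theorem translateSum_star_eq_neg (h : IsVanVleckPair (translateSum I c z f) f)
    (hz : ∀ i ∈ I, z i ∈ Set.center S) :
    translateSum I c (star z) f = -translateSum I c z f := by
  by_cases h_odd : translateSum I c z f ∘ star = -translateSum I c z f
  · simp [h.eq_zero_of_odd h_odd]
  obtain ⟨x, hx⟩ := Function.ne_iff.mp h_odd
  funext a
  have h_mul := h.translateSum_add_mul_translateSum_add hz a x
  have hx_ne : translateSum I c z f x + translateSum I c z f (star x) ≠ 0 := fun h_zero =>
    hx (eq_neg_of_add_eq_zero_right h_zero)
  exact eq_neg_of_add_eq_zero_right ((mul_eq_zero.mp h_mul).resolve_right hx_ne)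

end Integration

end IsVanVleckPair

theorem stmt_3_general {S ι R : Type*} [Semigroup S] [StarMul S] [CommRing R] [NoZeroDivisors R]
    [NeZero (2 : R)] (I : Finset ι) (c : ι → R) (z : ι → S) (hz : ∀ i ∈ I, z i ∈ Set.center S)
    (f : S → R)
    (hVV : ∀ x y : S,
      (∑ i ∈ I, c i * f (x * star y * z i)) - (∑ i ∈ I, c i * f (x * y * z i)) = 2 * f x * f y)
    (x : S) :
    (∑ i ∈ I, ∑ j ∈ I, c i * c j * f (x * star (z i) * z j)) = f x * ∑ i ∈ I, c i * f (z i) := by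
  have h : IsVanVleckPair (translateSum I c z f) f := fun x y => by
    simpa only [translateSum_apply] using hVV x y
  have h_lhs : (∑ i ∈ I, ∑ j ∈ I, c i * c j * f (x * star (z i) * z j)) =
      translateSum I c (star z) (translateSum I c z f) x := by
    simp only [translateSum_apply, Finset.mul_sum, mul_assoc (c _), Pi.star_apply]
  have h_opposite : translateSum I c (star z) (translateSum I c z f) x =
      -translateSum I c z (translateSum I c z f) x := by
    rw [translateSum_comm I c (star z) c hz, h.translateSum_star_eq_neg hz, map_neg, Pi.neg_apply]
  rw [h_lhs]
  refine mul_left_cancel₀ (two_ne_zero (α := R)) ?_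
  linear_combination h.translateSum_star_sub_translateSum c x + h_opposite

theorem stmt_3 {S ι : Type*} [Semigroup S] (τ : S → S)
    (hτmul : ∀ x y : S, τ (x * y) = τ y * τ x)
    (hτinv : ∀ x : S, τ (τ x) = x)
    (I : Finset ι) (c : ι → ℂ) (z : ι → S)
    (hz : ∀ i ∈ I, ∀ s : S, z i * s = s * z i)
    (f : S → ℂ) (hf : f ≠ 0)
(hVV : ∀ x y : S,
      (∑ i ∈ I, c i * f (x * τ y * z i)) - (∑ i ∈ I, c i * f (x * y * z i))
        = 2 * f x * f y) :
    ∀ x : S, (∑ i ∈ I, ∑ j ∈ I, c i * c j * f (x * τ (z i) * z j))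
      = f x * ∑ i ∈ I, c i * f (z i) :=
  letI : StarMul S := { star := τ, star_involutive := hτinv, star_mul := hτmul }
  stmt_3_general I c z (fun i hi => Semigroup.mem_center_iff.mpr fun s => (hz i hi s).symm) f hVV
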